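/- arXiv:1010.1969 — 2 statements merged into one kernel-verified Lean document; each statement's English description precedes it below -/
import Mathlib

section
/- Let H : ℝ^d × ℝ^d → ℝ be smooth, (Q,P) the jointly smooth Hamiltonian flow with Hamiltonian H on [0,T], and S the associated action with ∂_t S = P·∂_P H(Q,P) − H(Q,P), S(0,q,p) = 0. Fix t ∈ [0,T] and x, y ∈ ℝ^d, and define Φ(t,x,y,q,p) = S(t,q,p) + (i/2)|x − Q(t,q,p)|² + P(t,q,p)·(x − Q(t,q,p)) + (i/2)|y − q|² − p·(y − q). Then for all (q,p) and all k = 1,…,d: i (∂_{q_k} − i ∂_{p_k}) Φ = Σ_{j=1}^d Z_{kj} (x_j − Q_j(t,q,p)), where Z_{kj} = (∂_{q_k} − i ∂_{p_k})(Q_j + i P_j)(t,q,p). -/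
noncomputable section

/-- The frozen Gaussian phase `Φ(t,x,y,·,·)` as a function of `(q,p)`, with `t, x, y` fixed. -/
def Phi3 (d : ℕ) (S : ℝ × (Fin d → ℝ) × (Fin d → ℝ) → ℝ)
    (Q P : ℝ × (Fin d → ℝ) × (Fin d → ℝ) → Fin d → ℝ)
    (t : ℝ) (x y : Fin d → ℝ) (w : (Fin d → ℝ) × (Fin d → ℝ)) : ℂ :=
  (S (t, w.1, w.2) : ℂ)
    + (Complex.I / 2) * ((∑ j, (x j - Q (t, w.1, w.2) j) ^ 2 : ℝ) : ℂ)
    + ((∑ j, P (t, w.1, w.2) j * (x j - Q (t, w.1, w.2) j) : ℝ) : ℂ)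
    + (Complex.I / 2) * ((∑ j, (y j - w.1 j) ^ 2 : ℝ) : ℂ)
    - ((∑ j, w.2 j * (y j - w.1 j) : ℝ) : ℂ)

/-!
Differentiating `∂ₜS = P · ∂ₜQ - H(Q, P)` along a parameter and substituting Hamilton's equations
cancels the terms with `∂H`, so the one-form `dS - P · dQ` on parameter space does not depend on
time; the initial data evaluate it to `-p · dq`. This removes the derivatives of `S` from `dΦ` and
leaves `i dΦ = ∑ⱼ d(Qⱼ + iPⱼ) (xⱼ - Qⱼ) + ∑ⱼ (dqⱼ - i dpⱼ) (yⱼ - qⱼ)`, whose last sum is killed by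
`∂_{z_k} = ∂_{q_k} - i ∂_{p_k}`.
-/

section SliceDerivatives

variable {W F : Type*} [NormedAddCommGroup W] [NormedSpace ℝ W]
  [NormedAddCommGroup F] [NormedSpace ℝ F] {f : ℝ × W → F}

theorem hasDerivAt_slice_left {t : ℝ} {w : W} (hf : DifferentiableAt ℝ f (t, w)) :
    HasDerivAt (fun s ↦ f (s, w)) (fderiv ℝ f (t, w) (1, 0)) t :=
  hf.hasFDerivAt.comp_hasDerivAt t ((hasDerivAt_id t).prodMk (hasDerivAt_const t w))

theorem hasFDerivAt_slice_right {t : ℝ} {w : W} (hf : DifferentiableAt ℝ f (t, w)) :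
    HasFDerivAt (fun w ↦ f (t, w)) (fderiv ℝ f (t, w) ∘L .inr ℝ ℝ W) w :=
  hf.hasFDerivAt.comp w (hasFDerivAt_prodMk_right t w)

end SliceDerivatives

section SecondDerivatives

variable {E F : Type*} [NormedAddCommGroup E] [NormedSpace ℝ E]
  [NormedAddCommGroup F] [NormedSpace ℝ F] {f : E → F}

theorem differentiable_fderiv_of_contDiff_two (hf : ContDiff ℝ 2 f) :
    Differentiable ℝ (fderiv ℝ f) :=
  (hf.fderiv_right (m := 1) (by norm_num)).differentiable one_ne_zero

theorem differentiable_fderiv_apply (hf : ContDiff ℝ 2 f) (u : E) :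
    Differentiable ℝ (fun z ↦ fderiv ℝ f z u) :=
  (differentiable_fderiv_of_contDiff_two hf).clm_apply (differentiable_const u)

theorem fderiv_fderiv_apply_comm (hf : ContDiff ℝ 2 f) (z u v : E) :
    fderiv ℝ (fun z ↦ fderiv ℝ f z u) z v = fderiv ℝ (fun z ↦ fderiv ℝ f z v) z u := by
  have second_derivative (a b : E) :
      fderiv ℝ (fun z ↦ fderiv ℝ f z a) z b = fderiv ℝ (fderiv ℝ f) z b a := by
    simp [fderiv_clm_apply (differentiable_fderiv_of_contDiff_two hf z) (differentiableAt_const a)]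
  rw [second_derivative, second_derivative]
  exact hf.contDiffAt.isSymmSndFDerivAt (by simp) v u

end SecondDerivatives

section HamiltonianAction

variable {E F W : Type*} [NormedAddCommGroup E] [NormedSpace ℝ E]
  [NormedAddCommGroup F] [NormedSpace ℝ F] [NormedAddCommGroup W] [NormedSpace ℝ W]

/-- A family, parametrized by `w : W`, of trajectories `t ↦ (Q (t, w), P (t, w))` satisfying
Hamilton's equations at the times in `I`, together with its action `S`. Momenta in `F` are paired
with positions in `E` by `B`, and the equations are tested against arbitrary vectors, so that
neither coordinates nor nondegeneracy of `B` are involved. -/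
structure IsHamiltonianFamily (B : F →L[ℝ] E →L[ℝ] ℝ) (H : E × F → ℝ) (Q : ℝ × W → E)
    (P : ℝ × W → F) (S : ℝ × W → ℝ) (I : Set ℝ) : Prop where
  pairing_deriv_position : ∀ t ∈ I, ∀ w η,
    B η (fderiv ℝ Q (t, w) (1, 0)) = fderiv ℝ H (Q (t, w), P (t, w)) (0, η)
  pairing_deriv_momentum : ∀ t ∈ I, ∀ w ξ,
    B (fderiv ℝ P (t, w) (1, 0)) ξ = -fderiv ℝ H (Q (t, w), P (t, w)) (ξ, 0)
  deriv_action : ∀ t ∈ I, ∀ w,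
    fderiv ℝ S (t, w) (1, 0) = B (P (t, w)) (fderiv ℝ Q (t, w) (1, 0)) - H (Q (t, w), P (t, w))

namespace IsHamiltonianFamily

variable {B : F →L[ℝ] E →L[ℝ] ℝ} {H : E × F → ℝ} {Q : ℝ × W → E} {P : ℝ × W → F}
  {S : ℝ × W → ℝ} {I : Set ℝ}

theorem fderiv_deriv_action (h : IsHamiltonianFamily B H Q P S I) (hH : Differentiable ℝ H)
    (hQ : ContDiff ℝ 2 Q) (hP : Differentiable ℝ P) (hS : ContDiff ℝ 2 S)
    {t : ℝ} (ht : t ∈ I) (w v : W) :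
    fderiv ℝ (fun z ↦ fderiv ℝ S z (1, 0)) (t, w) (0, v) =
      B (P (t, w)) (fderiv ℝ (fun z ↦ fderiv ℝ Q z (1, 0)) (t, w) (0, v)) +
        B (fderiv ℝ P (t, w) (1, 0)) (fderiv ℝ Q (t, w) (0, v)) := by
  have hQ₁ : Differentiable ℝ Q := hQ.differentiable two_ne_zero
  have hQ' := hasFDerivAt_slice_right (hQ₁ (t, w))
  have hP' := hasFDerivAt_slice_right (hP (t, w))
  have hkinetic := B.hasFDerivAt_of_bilinear hP'
    (hasFDerivAt_slice_right (differentiable_fderiv_apply hQ (1, 0) (t, w)))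
  have henergy := (hH (Q (t, w), P (t, w))).hasFDerivAt.comp w (hQ'.prodMk hP')
  have hlagrangian := (hkinetic.sub henergy).congr_of_eventuallyEq
    (.of_forall fun w ↦ h.deriv_action t ht w)
  have hderiv := DFunLike.congr_fun
    ((hasFDerivAt_slice_right (differentiable_fderiv_apply hS (1, 0) (t, w))).unique hlagrangian) v
  have hsplit (ξ : E) (η : F) : fderiv ℝ H (Q (t, w), P (t, w)) (ξ, η) =
      B η (fderiv ℝ Q (t, w) (1, 0)) - B (fderiv ℝ P (t, w) (1, 0)) ξ := by
    rw [h.pairing_deriv_position t ht, h.pairing_deriv_momentum t ht, sub_neg_eq_add, ← map_add]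
    simp
  simp only [ContinuousLinearMap.comp_apply, ContinuousLinearMap.inr_apply,
    ContinuousLinearMap.precompR_apply, ContinuousLinearMap.compL_apply, sub_apply, add_apply,
    ContinuousLinearMap.precompL_apply, ContinuousLinearMap.prod_apply, hsplit] at hderiv
  linarith

theorem hasDerivAt_fderiv_action_sub_pairing (h : IsHamiltonianFamily B H Q P S I)
    (hH : Differentiable ℝ H) (hQ : ContDiff ℝ 2 Q) (hP : Differentiable ℝ P)
    (hS : ContDiff ℝ 2 S) {t : ℝ} (ht : t ∈ I) (w v : W) :
    HasDerivAt (fun s ↦ fderiv ℝ S (s, w) (0, v) - B (P (s, w)) (fderiv ℝ Q (s, w) (0, v)))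
      0 t := by
  have hS' := hasDerivAt_slice_left (differentiable_fderiv_apply hS (0, v) (t, w))
  have hQ' := hasDerivAt_slice_left (differentiable_fderiv_apply hQ (0, v) (t, w))
  have hP' := hasDerivAt_slice_left (hP (t, w))
  have hmixed : fderiv ℝ (fun z ↦ fderiv ℝ S z (0, v)) (t, w) (1, 0) =
      B (fderiv ℝ P (t, w) (1, 0)) (fderiv ℝ Q (t, w) (0, v)) +
        B (P (t, w)) (fderiv ℝ (fun z ↦ fderiv ℝ Q z (0, v)) (t, w) (1, 0)) := by
    rw [fderiv_fderiv_apply_comm hS, fderiv_fderiv_apply_comm hQ,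
      h.fderiv_deriv_action hH hQ hP hS ht, add_comm]
  exact (hS'.sub ((B.hasFDerivAt.comp_hasDerivAt t hP').clm_apply hQ')).congr_deriv
    (sub_eq_zero.2 hmixed)

theorem fderiv_action_sub_pairing_eq (h : IsHamiltonianFamily B H Q P S I) (hI : Convex ℝ I)
    (hH : Differentiable ℝ H) (hQ : ContDiff ℝ 2 Q) (hP : Differentiable ℝ P)
    (hS : ContDiff ℝ 2 S) {s t : ℝ} (hs : s ∈ I) (ht : t ∈ I) (w v : W) :
    fderiv ℝ (fun w ↦ S (t, w)) w v - B (P (t, w)) (fderiv ℝ (fun w ↦ Q (t, w)) w v) =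
      fderiv ℝ (fun w ↦ S (s, w)) w v - B (P (s, w)) (fderiv ℝ (fun w ↦ Q (s, w)) w v) := by
  have hconst := hI.norm_image_sub_le_of_norm_hasDerivWithin_le (C := 0)
    (fun r hr ↦ (h.hasDerivAt_fderiv_action_sub_pairing hH hQ hP hS hr w v).hasDerivWithinAt)
    (fun _ _ ↦ norm_zero.le) hs ht
  rw [zero_mul, norm_le_zero_iff, sub_eq_zero] at hconst
  have hS₁ : Differentiable ℝ S := hS.differentiable two_ne_zero
  have hQ₁ : Differentiable ℝ Q := hQ.differentiable two_ne_zero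
  simpa [(hasFDerivAt_slice_right (hS₁ _)).fderiv, (hasFDerivAt_slice_right (hQ₁ _)).fderiv]
    using hconst

theorem fderiv_action_of_initial {Q : ℝ × (E × F) → E} {P : ℝ × (E × F) → F}
    {S : ℝ × (E × F) → ℝ} (h : IsHamiltonianFamily B H Q P S I) (hI : Convex ℝ I) (h0 : 0 ∈ I)
    (hH : Differentiable ℝ H) (hQ : ContDiff ℝ 2 Q) (hP : Differentiable ℝ P)
    (hS : ContDiff ℝ 2 S) (hQ0 : ∀ w, Q (0, w) = w.1) (hP0 : ∀ w, P (0, w) = w.2)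
    (hS0 : ∀ w, S (0, w) = 0) {t : ℝ} (ht : t ∈ I) (w v : E × F) :
    fderiv ℝ (fun w ↦ S (t, w)) w v =
      B (P (t, w)) (fderiv ℝ (fun w ↦ Q (t, w)) w v) - B w.2 v.1 := by
  have hconserved := h.fderiv_action_sub_pairing_eq hI hH hQ hP hS h0 ht w v
  simp only [hS0, hQ0, hP0, fderiv_fun_const, fderiv_fst, Pi.zero_apply, zero_apply,
    ContinuousLinearMap.coe_fst'] at hconserved
  linarith

end IsHamiltonianFamily

end HamiltonianAction

section DotProduct

variable {ι : Type*} [Fintype ι]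

/-- The dot product as a continuous bilinear map: the pairing of momenta with positions
in coordinates. -/
def dotProductCLM : (ι → ℝ) →L[ℝ] (ι → ℝ) →L[ℝ] ℝ :=
  (dotProductBilin ℝ ℝ).toContinuousBilinearMap

theorem dotProductCLM_apply (u v : ι → ℝ) : dotProductCLM u v = u ⬝ᵥ v := rfl

theorem dotProductCLM_eq_of_single [DecidableEq ι] {L : (ι → ℝ) →ₗ[ℝ] ℝ} {u : ι → ℝ}
    (h : ∀ i, u i = L (Pi.single i 1)) (v : ι → ℝ) : dotProductCLM v u = L v := by
  conv_rhs => rw [← Finset.univ_sum_single v, map_sum]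
  refine Finset.sum_congr rfl fun i _ ↦ ?_
  rw [h, ← smul_eq_mul, ← map_smul, ← Pi.single_smul, smul_eq_mul, mul_one]

namespace IsHamiltonianFamily

theorem of_single {W : Type*} [NormedAddCommGroup W] [NormedSpace ℝ W] [DecidableEq ι]
    {H : (ι → ℝ) × (ι → ℝ) → ℝ} {Q P : ℝ × W → ι → ℝ} {S : ℝ × W → ℝ} {I : Set ℝ}
    (hQ : ∀ t ∈ I, ∀ w j, fderiv ℝ Q (t, w) (1, 0) j =
      fderiv ℝ H (Q (t, w), P (t, w)) (0, Pi.single j 1))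
    (hP : ∀ t ∈ I, ∀ w j, fderiv ℝ P (t, w) (1, 0) j =
      -fderiv ℝ H (Q (t, w), P (t, w)) (Pi.single j 1, 0))
    (hS : ∀ t ∈ I, ∀ w, fderiv ℝ S (t, w) (1, 0) =
      ∑ j, P (t, w) j * fderiv ℝ H (Q (t, w), P (t, w)) (0, Pi.single j 1) -
        H (Q (t, w), P (t, w))) :
    IsHamiltonianFamily dotProductCLM H Q P S I where
  pairing_deriv_position t ht w η :=
    dotProductCLM_eq_of_single
      (L := (fderiv ℝ H (Q (t, w), P (t, w)) ∘L .inr ℝ _ _).toLinearMap) (hQ t ht w) η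
  pairing_deriv_momentum t ht w ξ := by
    rw [dotProductCLM_apply, dotProduct_comm]
    exact dotProductCLM_eq_of_single
      (L := -(fderiv ℝ H (Q (t, w), P (t, w)) ∘L .inl ℝ _ _).toLinearMap) (hP t ht w) ξ
  deriv_action t ht w := by
    simp only [hS t ht, dotProductCLM_apply, dotProduct, hQ t ht]

end IsHamiltonianFamily

variable {W : Type*} [NormedAddCommGroup W] [NormedSpace ℝ W] {f g : W → ι → ℝ} {w : W}

@[fun_prop]
theorem differentiableAt_dotProduct (hf : DifferentiableAt ℝ f w) (hg : DifferentiableAt ℝ g w) :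
    DifferentiableAt ℝ (fun w ↦ f w ⬝ᵥ g w) w :=
  (dotProductCLM.hasFDerivAt_of_bilinear hf.hasFDerivAt hg.hasFDerivAt).differentiableAt

theorem fderiv_dotProduct_apply (hf : DifferentiableAt ℝ f w) (hg : DifferentiableAt ℝ g w)
    (v : W) :
    fderiv ℝ (fun w ↦ f w ⬝ᵥ g w) w v = f w ⬝ᵥ fderiv ℝ g w v + fderiv ℝ f w v ⬝ᵥ g w :=
  DFunLike.congr_fun (dotProductCLM.fderiv_of_bilinear hf hg) v

end DotProduct

section GaussianPhase

open Complex (I)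

theorem fderiv_ofReal_add_I_mul_apply {W : Type*} [NormedAddCommGroup W] [NormedSpace ℝ W]
    {f g : W → ℝ} {w : W} (hf : DifferentiableAt ℝ f w) (hg : DifferentiableAt ℝ g w) (v : W) :
    fderiv ℝ (fun w ↦ (f w : ℂ) + I * (g w : ℂ)) w v = fderiv ℝ f w v + I * fderiv ℝ g w v := by
  have hf' := Complex.ofRealCLM.hasFDerivAt.comp w hf.hasFDerivAt
  have hg' := (Complex.ofRealCLM.hasFDerivAt.comp w hg.hasFDerivAt).const_mul I
  exact DFunLike.congr_fun (hf'.add hg').fderiv v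

section RealAndImaginaryParts

variable {ι : Type*} [Fintype ι] {Q P : (ι → ℝ) × (ι → ℝ) → ι → ℝ} {S : (ι → ℝ) × (ι → ℝ) → ℝ}
  {w : (ι → ℝ) × (ι → ℝ)}

/-- The real part of the Gaussian phase at a fixed time, where `S`, `Q`, `P` are functions of the
phase space point `w = (q, p)`. -/
def phaseRe (S : (ι → ℝ) × (ι → ℝ) → ℝ) (Q P : (ι → ℝ) × (ι → ℝ) → ι → ℝ) (x y : ι → ℝ)
    (w : (ι → ℝ) × (ι → ℝ)) : ℝ :=
  S w + P w ⬝ᵥ (x - Q w) - w.2 ⬝ᵥ (y - w.1)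

/-- The imaginary part of the Gaussian phase at a fixed time, where `Q` is a function of the
phase space point `w = (q, p)`. -/
def phaseIm (Q : (ι → ℝ) × (ι → ℝ) → ι → ℝ) (x y : ι → ℝ) (w : (ι → ℝ) × (ι → ℝ)) : ℝ :=
  ((x - Q w) ⬝ᵥ (x - Q w) + (y - w.1) ⬝ᵥ (y - w.1)) / 2

theorem differentiableAt_phaseRe (hS : DifferentiableAt ℝ S w) (hQ : DifferentiableAt ℝ Q w)
    (hP : DifferentiableAt ℝ P w) (x y : ι → ℝ) : DifferentiableAt ℝ (phaseRe S Q P x y) w := by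
  unfold phaseRe
  fun_prop

theorem differentiableAt_phaseIm (hQ : DifferentiableAt ℝ Q w) (x y : ι → ℝ) :
    DifferentiableAt ℝ (phaseIm Q x y) w := by
  unfold phaseIm
  fun_prop

theorem fderiv_phaseRe_apply (hS : DifferentiableAt ℝ S w) (hQ : DifferentiableAt ℝ Q w)
    (hP : DifferentiableAt ℝ P w) (x y : ι → ℝ) {v : (ι → ℝ) × (ι → ℝ)}
    (haction : fderiv ℝ S w v = P w ⬝ᵥ fderiv ℝ Q w v - w.2 ⬝ᵥ v.1) :
    fderiv ℝ (phaseRe S Q P x y) w v = fderiv ℝ P w v ⬝ᵥ (x - Q w) - v.2 ⬝ᵥ (y - w.1) := by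
  have hpx : DifferentiableAt ℝ (fun w ↦ P w ⬝ᵥ (x - Q w)) w := by fun_prop
  have hpy : DifferentiableAt ℝ (fun w : (ι → ℝ) × (ι → ℝ) ↦ w.2 ⬝ᵥ (y - w.1)) w := by fun_prop
  unfold phaseRe
  rw [fderiv_fun_sub (hS.fun_add hpx) hpy, fderiv_fun_add hS hpx, sub_apply, add_apply,
    fderiv_dotProduct_apply hP (hQ.const_sub x),
    fderiv_dotProduct_apply (by fun_prop) (by fun_prop), haction,
    fderiv_const_sub, fderiv_const_sub, fderiv_fst, fderiv_snd]
  simp only [neg_apply, dotProduct_neg, ContinuousLinearMap.coe_fst', ContinuousLinearMap.coe_snd']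
  ring

theorem fderiv_phaseIm_apply (hQ : DifferentiableAt ℝ Q w) (x y : ι → ℝ) (v : (ι → ℝ) × (ι → ℝ)) :
    fderiv ℝ (phaseIm Q x y) w v =
      -(fderiv ℝ Q w v ⬝ᵥ (x - Q w)) - v.1 ⬝ᵥ (y - w.1) := by
  have hx : DifferentiableAt ℝ (fun w ↦ x - Q w) w := by fun_prop
  have hy : DifferentiableAt ℝ (fun w : (ι → ℝ) × (ι → ℝ) ↦ y - w.1) w := by fun_prop
  unfold phaseIm
  simp only [div_eq_mul_inv]
  rw [fderiv_mul_const (by fun_prop), fderiv_fun_add (by fun_prop) (by fun_prop), smul_apply,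
    add_apply, fderiv_dotProduct_apply hx hx, fderiv_dotProduct_apply hy hy,
    fderiv_const_sub, fderiv_const_sub, fderiv_fst]
  simp only [neg_apply, neg_dotProduct, ContinuousLinearMap.coe_fst', smul_eq_mul,
    dotProduct_comm (x - Q w), dotProduct_comm (y - w.1)]
  ring

end RealAndImaginaryParts

variable {d : ℕ} {Q P : ℝ × (Fin d → ℝ) × (Fin d → ℝ) → Fin d → ℝ}
  {S : ℝ × (Fin d → ℝ) × (Fin d → ℝ) → ℝ}

theorem Phi3_eq_ofReal_add_I_mul (t : ℝ) (x y : Fin d → ℝ) :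
    Phi3 d S Q P t x y = fun w ↦
      (phaseRe (fun w ↦ S (t, w)) (fun w ↦ Q (t, w)) (fun w ↦ P (t, w)) x y w : ℂ) +
        I * (phaseIm (fun w ↦ Q (t, w)) x y w : ℂ) := by
  funext w
  simp only [Phi3, phaseRe, phaseIm, dotProduct, Pi.sub_apply, pow_two]
  push_cast
  ring

theorem I_mul_fderiv_Phi3_apply {t : ℝ} {w : (Fin d → ℝ) × (Fin d → ℝ)}
    (hQ : DifferentiableAt ℝ (fun w ↦ Q (t, w)) w) (hP : DifferentiableAt ℝ (fun w ↦ P (t, w)) w)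
    (hS : DifferentiableAt ℝ (fun w ↦ S (t, w)) w) (x y : Fin d → ℝ)
    {v : (Fin d → ℝ) × (Fin d → ℝ)}
    (haction : fderiv ℝ (fun w ↦ S (t, w)) w v =
      P (t, w) ⬝ᵥ fderiv ℝ (fun w ↦ Q (t, w)) w v - w.2 ⬝ᵥ v.1) :
    I * fderiv ℝ (Phi3 d S Q P t x y) w v =
      ∑ j, fderiv ℝ (fun w ↦ (Q (t, w) j : ℂ) + I * (P (t, w) j : ℂ)) w v * (x j - Q (t, w) j) +
        (((v.1 ⬝ᵥ (y - w.1) : ℝ) : ℂ) - I * ((v.2 ⬝ᵥ (y - w.1) : ℝ) : ℂ)) := by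
  have hZ (j : Fin d) : fderiv ℝ (fun w ↦ (Q (t, w) j : ℂ) + I * (P (t, w) j : ℂ)) w v =
      fderiv ℝ (fun w ↦ Q (t, w)) w v j + I * fderiv ℝ (fun w ↦ P (t, w)) w v j := by
    rw [fderiv_ofReal_add_I_mul_apply (differentiableAt_pi.1 hQ j) (differentiableAt_pi.1 hP j),
      fderiv_apply hQ, fderiv_apply hP]
    rfl
  have hsum : ∑ j, fderiv ℝ (fun w ↦ (Q (t, w) j : ℂ) + I * (P (t, w) j : ℂ)) w v *
        (x j - Q (t, w) j) =
      ((fderiv ℝ (fun w ↦ Q (t, w)) w v ⬝ᵥ (x - Q (t, w)) : ℝ) : ℂ) +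
        I * ((fderiv ℝ (fun w ↦ P (t, w)) w v ⬝ᵥ (x - Q (t, w)) : ℝ) : ℂ) := by
    simp only [hZ, dotProduct, Pi.sub_apply, add_mul, Finset.sum_add_distrib, mul_assoc,
      Finset.mul_sum, Complex.ofReal_sum, Complex.ofReal_mul, Complex.ofReal_sub]
  rw [hsum, Phi3_eq_ofReal_add_I_mul,
    fderiv_ofReal_add_I_mul_apply (differentiableAt_phaseRe hS hQ hP x y)
      (differentiableAt_phaseIm hQ x y),
    fderiv_phaseRe_apply hS hQ hP x y haction, fderiv_phaseIm_apply hQ x y]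
  push_cast
  linear_combination (-(fderiv ℝ (fun w ↦ Q (t, w)) w v ⬝ᵥ (x - Q (t, w)) : ℝ) -
    (v.1 ⬝ᵥ (y - w.1) : ℝ) : ℂ) * Complex.I_sq

theorem stmt_3_general {H : (Fin d → ℝ) × (Fin d → ℝ) → ℝ} {J : Set ℝ}
    (h : IsHamiltonianFamily dotProductCLM H Q P S J) (hJ : Convex ℝ J) (h0 : 0 ∈ J)
    (hH : Differentiable ℝ H) (hQ : ContDiff ℝ 2 Q) (hP : Differentiable ℝ P)
    (hS : ContDiff ℝ 2 S) (hQ0 : ∀ w, Q (0, w) = w.1) (hP0 : ∀ w, P (0, w) = w.2)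
    (hS0 : ∀ w, S (0, w) = 0) {t : ℝ} (ht : t ∈ J) (x y q p : Fin d → ℝ) (k : Fin d) :
    I * (fderiv ℝ (Phi3 d S Q P t x y) (q, p) (Pi.single k 1, 0) -
        I * fderiv ℝ (Phi3 d S Q P t x y) (q, p) (0, Pi.single k 1)) =
      ∑ j, (fderiv ℝ (fun w ↦ (Q (t, w) j : ℂ) + I * (P (t, w) j : ℂ)) (q, p) (Pi.single k 1, 0) -
          I * fderiv ℝ (fun w ↦ (Q (t, w) j : ℂ) + I * (P (t, w) j : ℂ)) (q, p)
            (0, Pi.single k 1)) * (x j - Q (t, q, p) j) := by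
  have hQ₁ : Differentiable ℝ Q := hQ.differentiable two_ne_zero
  have hS₁ : Differentiable ℝ S := hS.differentiable two_ne_zero
  have hdΦ (v) := I_mul_fderiv_Phi3_apply (hasFDerivAt_slice_right (hQ₁ _)).differentiableAt
    (hasFDerivAt_slice_right (hP _)).differentiableAt
    (hasFDerivAt_slice_right (hS₁ _)).differentiableAt x y
    (h.fderiv_action_of_initial hJ h0 hH hQ hP hS hQ0 hP0 hS0 ht (q, p) v)
  rw [mul_sub, mul_left_comm, hdΦ, hdΦ]
  simp only [single_one_dotProduct, zero_dotProduct, sub_mul, mul_assoc, Finset.sum_sub_distrib,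
    ← Finset.mul_sum, Complex.ofReal_zero]
  linear_combination ((y - q) k : ℂ) * Complex.I_sq

end GaussianPhase

/-- For the frozen Gaussian phase `Φ` built from the Hamiltonian flow `(Q,P)`
and action `S`, one has `i ∂_{z_k} Φ = Σ_j Z_{kj} (x_j − Q_j)` with
`Z_{kj} = ∂_{z_k}(Q_j + iP_j)` and `∂_{z_k} = ∂_{q_k} − i ∂_{p_k}`. -/
theorem stmt_3 (d : ℕ) (T : ℝ) (hT : 0 < T)
    (H : (Fin d → ℝ) × (Fin d → ℝ) → ℝ)
    (Q P : ℝ × (Fin d → ℝ) × (Fin d → ℝ) → Fin d → ℝ)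
    (S : ℝ × (Fin d → ℝ) × (Fin d → ℝ) → ℝ)
    (hH : ContDiff ℝ (⊤ : ℕ∞) H)
    (hQ : ContDiff ℝ (⊤ : ℕ∞) Q) (hP : ContDiff ℝ (⊤ : ℕ∞) P) (hS : ContDiff ℝ (⊤ : ℕ∞) S)
    (hQt : ∀ t ∈ Set.Icc (0:ℝ) T, ∀ q p : Fin d → ℝ, ∀ j : Fin d,
      fderiv ℝ Q (t, q, p) (1, 0, 0) j
        = fderiv ℝ H (Q (t, q, p), P (t, q, p)) (0, Pi.single j 1))
    (hPt : ∀ t ∈ Set.Icc (0:ℝ) T, ∀ q p : Fin d → ℝ, ∀ j : Fin d,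
      fderiv ℝ P (t, q, p) (1, 0, 0) j
        = - fderiv ℝ H (Q (t, q, p), P (t, q, p)) (Pi.single j 1, 0))
    (hQ0 : ∀ q p : Fin d → ℝ, Q (0, q, p) = q)
    (hP0 : ∀ q p : Fin d → ℝ, P (0, q, p) = p)
    (hSt : ∀ t ∈ Set.Icc (0:ℝ) T, ∀ q p : Fin d → ℝ,
      fderiv ℝ S (t, q, p) (1, 0, 0)
        = (∑ j, P (t, q, p) j * fderiv ℝ H (Q (t, q, p), P (t, q, p)) (0, Pi.single j 1))
          - H (Q (t, q, p), P (t, q, p)))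
    (hS0 : ∀ q p : Fin d → ℝ, S (0, q, p) = 0)
    (t : ℝ) (ht : t ∈ Set.Icc (0:ℝ) T) (x y : Fin d → ℝ) :
    ∀ q p : Fin d → ℝ, ∀ k : Fin d,
      Complex.I * (fderiv ℝ (Phi3 d S Q P t x y) (q, p) (Pi.single k 1, 0)
          - Complex.I * fderiv ℝ (Phi3 d S Q P t x y) (q, p) (0, Pi.single k 1))
      = ∑ j, (fderiv ℝ (fun w : (Fin d → ℝ) × (Fin d → ℝ) =>
              ((Q (t, w.1, w.2) j : ℝ) : ℂ) + Complex.I * ((P (t, w.1, w.2) j : ℝ) : ℂ))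
              (q, p) (Pi.single k 1, 0)
            - Complex.I * fderiv ℝ (fun w : (Fin d → ℝ) × (Fin d → ℝ) =>
              ((Q (t, w.1, w.2) j : ℝ) : ℂ) + Complex.I * ((P (t, w.1, w.2) j : ℝ) : ℂ))
              (q, p) (0, Pi.single k 1))
          * (((x j : ℝ) : ℂ) - ((Q (t, q, p) j : ℝ) : ℂ)) := by
  intro q p k
  have hflow : IsHamiltonianFamily dotProductCLM H Q P S (Set.Icc 0 T) :=
    .of_single (fun t ht w ↦ hQt t ht w.1 w.2) (fun t ht w ↦ hPt t ht w.1 w.2)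
      (fun t ht w ↦ hSt t ht w.1 w.2)
  exact stmt_3_general hflow (convex_Icc 0 T) ⟨le_rfl, hT.le⟩ (hH.differentiable (by simp))
    (hQ.of_le (by norm_cast)) (hP.differentiable (by simp)) (hS.of_le (by norm_cast))
    (fun w ↦ hQ0 w.1 w.2) (fun w ↦ hP0 w.1 w.2) (fun w ↦ hS0 w.1 w.2) ht x y q p k
end
end

section
/- Let d ≥ 1, ε > 0, x ∈ ℝ^d. Let Q, P : ℝ^{2d} → ℝ^d and S : ℝ^{2d} → ℝ be smooth functions of (q,p), all of whose derivatives have at most polynomial growth, and define Φ(y,q,p) = S(q,p) + (i/2)|x − Q(q,p)|² + P(q,p)·(x − Q(q,p)) + (i/2)|y − q|² − p·(y − q). Assume the complex matrix Z(q,p) with entries Z_{kj} = (∂_{q_k} − i∂_{p_k})(Q_j + iP_j) satisfies i(∂_{q_k} − i∂_{p_k})Φ = Σ_j Z_{kj}(x_j − Q_j) for all (y,q,p), is invertible for every (q,p), and that all entries of Z^{-1} together with all their derivatives have at most polynomial growth. Then for every Schwartz matrix-valued function G : ℝ^{3d} → ℂ^{d×d} of (y,q,p): ∫_{ℝ^{3d}}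 Σ_{j,k} (x_j − Q_j) G_{jk} (x_k − Q_k) e^{iΦ/ε} dy dq dp = ∫_{ℝ^{3d}} [ ε Σ_{j,k,n} (∂_{z_n} Q_j) G_{jk} Z^{-1}_{kn} + ε² Σ_{j,k,n,r} ∂_{z_r}( ∂_{z_n}( G_{jk} Z^{-1}_{kn} ) Z^{-1}_{jr} ) ] e^{iΦ/ε} dy dq dp, where ∂_{z_k} = ∂_{q_k} − i∂_{p_k} acts in (q,p) at fixed y. -/
open MeasureTheory

noncomputable section

/-- The frozen Gaussian phase `Φ(y,q,p)` (with `x` fixed), on the triple space `(y,q,p)`. -/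
def FGAphase (d : ℕ) (x : Fin d → ℝ)
    (S : (Fin d → ℝ) × (Fin d → ℝ) → ℝ)
    (Q P : (Fin d → ℝ) × (Fin d → ℝ) → Fin d → ℝ)
    (w : (Fin d → ℝ) × (Fin d → ℝ) × (Fin d → ℝ)) : ℂ :=
  (S (w.2.1, w.2.2) : ℂ)
    + (Complex.I / 2) * ((∑ j, (x j - Q (w.2.1, w.2.2) j) ^ 2 : ℝ) : ℂ)
    + ((∑ j, P (w.2.1, w.2.2) j * (x j - Q (w.2.1, w.2.2) j) : ℝ) : ℂ)
    + (Complex.I / 2) * ((∑ j, (w.1 j - w.2.1 j) ^ 2 : ℝ) : ℂ)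
    - ((∑ j, w.2.2 j * (w.1 j - w.2.1 j) : ℝ) : ℂ)

/-- The entries `Z_{kj} = ∂_{z_k}(Q_j + iP_j)`, `∂_{z_k} = ∂_{q_k} − i∂_{p_k}`. -/
def Zentry (d : ℕ) (Q P : (Fin d → ℝ) × (Fin d → ℝ) → Fin d → ℝ)
    (w : (Fin d → ℝ) × (Fin d → ℝ)) (k j : Fin d) : ℂ :=
  (fderiv ℝ (fun v => ((Q v j : ℝ) : ℂ) + Complex.I * ((P v j : ℝ) : ℂ)) w (Pi.single k 1, 0))
    - Complex.I *
      (fderiv ℝ (fun v => ((Q v j : ℝ) : ℂ) + Complex.I * ((P v j : ℝ) : ℂ)) w (0, Pi.single k 1))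

/-- `∂_{z_n} Q_j` (as a complex number), `∂_{z_n} = ∂_{q_n} − i∂_{p_n}`. -/
def dzQ (d : ℕ) (Q : (Fin d → ℝ) × (Fin d → ℝ) → Fin d → ℝ)
    (w : (Fin d → ℝ) × (Fin d → ℝ)) (n j : Fin d) : ℂ :=
  fderiv ℝ (fun v => ((Q v j : ℝ) : ℂ)) w (Pi.single n 1, 0)
    - Complex.I * fderiv ℝ (fun v => ((Q v j : ℝ) : ℂ)) w (0, Pi.single n 1)

/-- `∂_{z_k}` acting in `(q,p)` at fixed `y`, on functions of `(y,q,p)`. -/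
def dz3 (d : ℕ) (k : Fin d)
    (g : (Fin d → ℝ) × (Fin d → ℝ) × (Fin d → ℝ) → ℂ)
    (w : (Fin d → ℝ) × (Fin d → ℝ) × (Fin d → ℝ)) : ℂ :=
  fderiv ℝ g w (0, Pi.single k 1, 0) - Complex.I * fderiv ℝ g w (0, 0, Pi.single k 1)
/-!
Put `φ = iΦ/ε`, so that `x - Q = ε Z⁻¹ ∂_z φ`. Each factor `x - Q` thus turns `e^φ` into a
derivative, and one integration by parts per factor moves it onto the amplitude. The first one
differentiates either the other factor `x - Q`, which gives the term of order `ε`, or the product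
`G Z⁻¹`, and a second integration by parts then gives the term of order `ε²`. No boundary terms
occur: `Im Φ ≥ 0` makes `e^φ` a function of temperate growth, so all amplitudes stay Schwartz.
-/

open scoped SchwartzMap LineDeriv

section TemperateGrowth

variable {E F : Type*} [NormedAddCommGroup E] [NormedSpace ℝ E]
  [NormedAddCommGroup F] [NormedSpace ℝ F]

@[fun_prop]
theorem hasTemperateGrowth_fst : (Prod.fst : E × F → E).HasTemperateGrowth :=
  (ContinuousLinearMap.fst ℝ E F).hasTemperateGrowth

@[fun_prop]
theorem hasTemperateGrowth_snd : (Prod.snd : E × F → F).HasTemperateGrowth :=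
  (ContinuousLinearMap.snd ℝ E F).hasTemperateGrowth

@[fun_prop]
theorem hasTemperateGrowth_apply {ι : Type*} [Fintype ι] (j : ι) :
    (fun v : ι → E => v j).HasTemperateGrowth :=
  (ContinuousLinearMap.proj (R := ℝ) (φ := fun _ : ι => E) j).hasTemperateGrowth

theorem hasTemperateGrowth_fderiv {f : E → F} (hf : f.HasTemperateGrowth) :
    (fderiv ℝ f).HasTemperateGrowth := by
  refine ⟨hf.1.fderiv_right (by simp), fun n => ?_⟩
  obtain ⟨k, C, hC⟩ := hf.2 (n + 1)
  exact ⟨k, C, fun x => by simpa only [norm_iteratedFDeriv_fderiv] using hC x⟩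

theorem norm_iteratedFDeriv_real_cexp (n : ℕ) (z : ℂ) :
    ‖iteratedFDeriv ℝ n Complex.exp z‖ = ‖Complex.exp z‖ := by
  have hexp : ContDiffAt ℂ n Complex.exp z := Complex.contDiff_exp.contDiffAt
  rw [← hexp.restrictScalars_iteratedFDeriv (𝕜 := ℝ), Function.comp_apply,
    ContinuousMultilinearMap.norm_restrictScalars, norm_iteratedFDeriv_eq_norm_iteratedDeriv,
    iteratedDeriv_eq_iterate, Complex.iter_deriv_exp]

-- `exp` itself is not of temperate growth on `ℂ`, only on half-planes `{re z ≤ M}`.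
theorem hasTemperateGrowth_cexp_of_re_le {φ : E → ℂ} (hφ : φ.HasTemperateGrowth) {M : ℝ}
    (hM : ∀ x, (φ x).re ≤ M) : (fun x => Complex.exp (φ x)).HasTemperateGrowth := by
  have hdiff : UniqueDiffOn ℝ {z : ℂ | z.re ≤ M} :=
    uniqueDiffOn_convex (convex_halfSpace_re_le M) ⟨M - 1, by simp⟩
  refine hφ.comp' (g := Complex.exp) (Set.range_subset_iff.2 hM) hdiff
    Complex.contDiff_exp.contDiffOn fun N => ⟨0, Real.exp M, by positivity, fun n _ z hz => ?_⟩
  rw [iteratedFDerivWithin_eq_iteratedFDeriv hdiff Complex.contDiff_exp.contDiffAt hz,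
    norm_iteratedFDeriv_real_cexp, Complex.norm_exp]
  simpa using hz

end TemperateGrowth

section ComplexLineDeriv

variable {E : Type*} [NormedAddCommGroup E] [NormedSpace ℝ E]

/-- The derivative `∂_a f - i ∂_b f` of `f` along the complex direction `a - i b`, encoded by the
pair of real directions `a`, `b`; no factor `1 / 2` is included. -/
def complexLineDeriv (a b : E) (f : E → ℂ) (x : E) : ℂ :=
  fderiv ℝ f x a - Complex.I * fderiv ℝ f x b

theorem complexLineDeriv_mul (a b : E) {f g : E → ℂ} {x : E} (hf : DifferentiableAt ℝ f x)
    (hg : DifferentiableAt ℝ g x) :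
    complexLineDeriv a b (fun y => f y * g y) x
      = complexLineDeriv a b f x * g x + f x * complexLineDeriv a b g x := by
  simp only [complexLineDeriv, fderiv_fun_mul hf hg, add_apply, smul_apply, smul_eq_mul]
  ring

theorem complexLineDeriv_const_mul (a b : E) (c : ℂ) {f : E → ℂ} {x : E}
    (hf : DifferentiableAt ℝ f x) :
    complexLineDeriv a b (fun y => c * f y) x = c * complexLineDeriv a b f x := by
  simp only [complexLineDeriv, fderiv_const_mul hf, smul_apply, smul_eq_mul]
  ring

theorem complexLineDeriv_cexp (a b : E) {φ : E → ℂ} {x : E} (hφ : DifferentiableAt ℝ φ x) :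
    complexLineDeriv a b (fun y => Complex.exp (φ y)) x
      = complexLineDeriv a b φ x * Complex.exp (φ x) := by
  simp only [complexLineDeriv, hφ.hasFDerivAt.cexp.fderiv, smul_apply, smul_eq_mul]
  ring

@[fun_prop]
theorem hasTemperateGrowth_complexLineDeriv (a b : E) {f : E → ℂ} (hf : f.HasTemperateGrowth) :
    (complexLineDeriv a b f).HasTemperateGrowth := by
  have hdir (v : E) : (fun x => fderiv ℝ f x v).HasTemperateGrowth :=
    (ContinuousLinearMap.apply ℝ ℂ v).hasTemperateGrowth.comp (hasTemperateGrowth_fderiv hf)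
  unfold complexLineDeriv
  fun_prop

/-- `complexLineDeriv a b` as a continuous operator on Schwartz space. -/
def complexLineDerivCLM (a b : E) : 𝓢(E, ℂ) →L[ℂ] 𝓢(E, ℂ) :=
  LineDeriv.lineDerivOpCLM ℂ 𝓢(E, ℂ) a - Complex.I • LineDeriv.lineDerivOpCLM ℂ 𝓢(E, ℂ) b

theorem coe_complexLineDerivCLM (a b : E) (f : 𝓢(E, ℂ)) :
    ⇑(complexLineDerivCLM a b f) = complexLineDeriv a b f :=
  rfl

theorem complexLineDerivCLM_smulLeftCLM (a b : E) {g : E → ℂ} (hg : g.HasTemperateGrowth)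
    (f : 𝓢(E, ℂ)) :
    complexLineDerivCLM a b (SchwartzMap.smulLeftCLM ℂ g f)
      = SchwartzMap.smulLeftCLM ℂ (complexLineDeriv a b g) f
        + SchwartzMap.smulLeftCLM ℂ g (complexLineDerivCLM a b f) := by
  ext x
  have hg' := hasTemperateGrowth_complexLineDeriv a b hg
  simp only [coe_complexLineDerivCLM, SchwartzMap.smulLeftCLM_apply hg,
    SchwartzMap.smulLeftCLM_apply hg', add_apply, smul_eq_mul]
  exact complexLineDeriv_mul a b (hg.1.differentiable (by simp) x) f.differentiableAt

end ComplexLineDeriv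

section OscillatoryIntegral

variable {E : Type*} [NormedAddCommGroup E] [NormedSpace ℝ E] [FiniteDimensional ℝ E]
  [MeasurableSpace E] [BorelSpace E] (μ : Measure E) [μ.IsAddHaarMeasure]

theorem integral_fderiv_schwartz_eq_zero (f : 𝓢(E, ℂ)) (v : E) :
    ∫ x, fderiv ℝ f x v ∂μ = 0 := by
  have h := integral_mul_fderiv_eq_neg_fderiv_mul_of_integrable (μ := μ) (v := v)
    (f := fun _ => (1 : ℂ)) (g := f) (by simp) (by simpa using (∂_{v} f).integrable)
    (by simpa using f.integrable) (by simp) fun _ _ => f.differentiableAt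
  simpa using h

theorem integral_complexLineDerivCLM_eq_zero (a b : E) (f : 𝓢(E, ℂ)) :
    ∫ x, complexLineDerivCLM a b f x ∂μ = 0 := by
  have hint (v : E) : Integrable (fun x => fderiv ℝ f x v) μ := (∂_{v} f).integrable
  simp only [coe_complexLineDerivCLM, complexLineDeriv]
  rw [integral_sub (hint a) ((hint b).const_mul _), integral_const_mul,
    integral_fderiv_schwartz_eq_zero, integral_fderiv_schwartz_eq_zero, mul_zero, sub_zero]

/-- The functional `f ↦ ∫ f e^φ dμ` on Schwartz functions. It is meaningful when `e^φ` is of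
temperate growth; otherwise `SchwartzMap.smulLeftCLM` makes it zero. -/
def oscillatoryIntegral (φ : E → ℂ) : 𝓢(E, ℂ) →L[ℂ] ℂ :=
  SchwartzMap.integralCLM ℂ μ ∘L SchwartzMap.smulLeftCLM ℂ fun x => Complex.exp (φ x)

variable {μ} {φ : E → ℂ} {M : ℝ} (hφ : φ.HasTemperateGrowth) (hM : ∀ x, (φ x).re ≤ M)
include hφ hM

theorem oscillatoryIntegral_apply (f : 𝓢(E, ℂ)) :
    oscillatoryIntegral μ φ f = ∫ x, f x * Complex.exp (φ x) ∂μ := by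
  simp only [oscillatoryIntegral, ContinuousLinearMap.comp_apply, SchwartzMap.integralCLM_apply,
    SchwartzMap.smulLeftCLM_apply (hasTemperateGrowth_cexp_of_re_le hφ hM), smul_eq_mul, mul_comm]

theorem oscillatoryIntegral_complexLineDerivCLM (a b : E) (f : 𝓢(E, ℂ)) :
    oscillatoryIntegral μ φ (complexLineDerivCLM a b f)
      = -oscillatoryIntegral μ φ (SchwartzMap.smulLeftCLM ℂ (complexLineDeriv a b φ) f) := by
  have hexp := hasTemperateGrowth_cexp_of_re_le hφ hM
  have hdφ := hasTemperateGrowth_complexLineDeriv a b hφ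
  have hdexp : complexLineDeriv a b (fun x => Complex.exp (φ x))
      = (fun x => Complex.exp (φ x)) * complexLineDeriv a b φ := by
    ext x
    rw [complexLineDeriv_cexp a b (hφ.1.differentiable (by simp) x), Pi.mul_apply, mul_comm]
  have h := integral_complexLineDerivCLM_eq_zero μ a b
    (SchwartzMap.smulLeftCLM ℂ (fun x => Complex.exp (φ x)) f)
  rw [complexLineDerivCLM_smulLeftCLM a b hexp, hdexp,
    ← SchwartzMap.smulLeftCLM_smulLeftCLM_apply hexp hdφ, ← SchwartzMap.integralCLM_apply ℂ,
    map_add] at h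
  exact eq_neg_of_add_eq_zero_right h

variable {ι : Type*} [Fintype ι] (a b : ι → E) (ε : ℂ)

theorem oscillatoryIntegral_smulLeftCLM {c : ι → E → ℂ} (hc : ∀ n, (c n).HasTemperateGrowth)
    {χ : E → ℂ} (hχ : ∀ x, χ x = ε * ∑ n, c n x * complexLineDeriv (a n) (b n) φ x)
    (f : 𝓢(E, ℂ)) :
    oscillatoryIntegral μ φ (SchwartzMap.smulLeftCLM ℂ χ f)
      = -ε * ∑ n, oscillatoryIntegral μ φ
          (complexLineDerivCLM (a n) (b n) (SchwartzMap.smulLeftCLM ℂ (c n) f)) := by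
  have hdφ (n : ι) := hasTemperateGrowth_complexLineDeriv (a n) (b n) hφ
  have hχf : SchwartzMap.smulLeftCLM ℂ χ f = ε • ∑ n,
      SchwartzMap.smulLeftCLM ℂ (complexLineDeriv (a n) (b n) φ)
        (SchwartzMap.smulLeftCLM ℂ (c n) f) := by
    ext x
    have hχ' : χ.HasTemperateGrowth := by
      rw [funext hχ]
      fun_prop
    simp only [SchwartzMap.smulLeftCLM_apply_apply, hχ', hdφ, hc, hχ, smul_apply, sum_apply,
      smul_eq_mul, mul_assoc, Finset.sum_mul, mul_left_comm]
  simp only [hχf, map_smul, map_sum, oscillatoryIntegral_complexLineDerivCLM hφ hM,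
    Finset.sum_neg_distrib, neg_mul_neg, smul_eq_mul]

theorem oscillatoryIntegral_smulLeftCLM_smulLeftCLM {c e : ι → E → ℂ}
    (hc : ∀ n, (c n).HasTemperateGrowth) (he : ∀ n, (e n).HasTemperateGrowth) {χ ψ : E → ℂ}
    (hχ : ∀ x, χ x = ε * ∑ n, c n x * complexLineDeriv (a n) (b n) φ x)
    (hψ : ∀ x, ψ x = ε * ∑ n, e n x * complexLineDeriv (a n) (b n) φ x) (f : 𝓢(E, ℂ)) :
    oscillatoryIntegral μ φ (SchwartzMap.smulLeftCLM ℂ χ (SchwartzMap.smulLeftCLM ℂ ψ f))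
      = ε * ∑ n, oscillatoryIntegral μ φ
            (-SchwartzMap.smulLeftCLM ℂ (complexLineDeriv (a n) (b n) ψ)
              (SchwartzMap.smulLeftCLM ℂ (c n) f))
        + ε ^ 2 * ∑ n, ∑ r, oscillatoryIntegral μ φ
            (complexLineDerivCLM (a r) (b r) (SchwartzMap.smulLeftCLM ℂ (e r)
              (complexLineDerivCLM (a n) (b n) (SchwartzMap.smulLeftCLM ℂ (c n) f)))) := by
  have hψ' : ψ.HasTemperateGrowth := by
    rw [funext hψ]
    fun_prop
  have hcomm (n : ι) : SchwartzMap.smulLeftCLM ℂ (c n) (SchwartzMap.smulLeftCLM ℂ ψ f)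
      = SchwartzMap.smulLeftCLM ℂ ψ (SchwartzMap.smulLeftCLM ℂ (c n) f) := by
    simp only [SchwartzMap.smulLeftCLM_smulLeftCLM_apply, hc n, hψ', mul_comm]
  simp only [oscillatoryIntegral_smulLeftCLM hφ hM a b ε hc hχ, hcomm,
    complexLineDerivCLM_smulLeftCLM _ _ hψ', map_add, map_neg,
    oscillatoryIntegral_smulLeftCLM hφ hM a b ε he hψ, Finset.sum_add_distrib,
    Finset.sum_neg_distrib, ← Finset.mul_sum]
  ring

theorem integral_quadraticForm_mul_cexp {X : E → ι → ℂ} {A : E → Matrix ι ι ℂ}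
    (hA : ∀ j k, (fun x => A x j k).HasTemperateGrowth)
    (hX : ∀ x j, X x j = ε * ∑ n, A x j n * complexLineDeriv (a n) (b n) φ x)
    (G : ι → ι → 𝓢(E, ℂ)) :
    ∫ x, (∑ j, ∑ k, X x j * G j k x * X x k) * Complex.exp (φ x) ∂μ
      = ∫ x, (ε * (∑ j, ∑ k, ∑ n,
            -complexLineDeriv (a n) (b n) (fun y => X y j) x * G j k x * A x k n)
          + ε ^ 2 * (∑ j, ∑ k, ∑ n, ∑ r,
            complexLineDeriv (a r) (b r) (fun y =>
              complexLineDeriv (a n) (b n) (fun z => G j k z * A z k n) y * A y j r) x))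
          * Complex.exp (φ x) ∂μ := by
  have hXt (j : ι) : (fun x => X x j).HasTemperateGrowth := by
    simp only [hX]
    fun_prop
  have hdX (j n : ι) := hasTemperateGrowth_complexLineDeriv (a n) (b n) (hXt j)
  let quadTerm (j k : ι) : 𝓢(E, ℂ) :=
    SchwartzMap.smulLeftCLM ℂ (fun y => X y k) (SchwartzMap.smulLeftCLM ℂ (fun y => X y j) (G j k))
  let gradTerm (j k n : ι) : 𝓢(E, ℂ) :=
    -SchwartzMap.smulLeftCLM ℂ (complexLineDeriv (a n) (b n) fun y => X y j)
      (SchwartzMap.smulLeftCLM ℂ (fun y => A y k n) (G j k))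
  let hessTerm (j k n r : ι) : 𝓢(E, ℂ) :=
    complexLineDerivCLM (a r) (b r) (SchwartzMap.smulLeftCLM ℂ (fun y => A y j r)
      (complexLineDerivCLM (a n) (b n) (SchwartzMap.smulLeftCLM ℂ (fun y => A y k n) (G j k))))
  calc
    _ = oscillatoryIntegral μ φ (∑ j, ∑ k, quadTerm j k) := by
      simp only [oscillatoryIntegral_apply hφ hM, quadTerm, sum_apply,
        SchwartzMap.smulLeftCLM_apply_apply, hXt, smul_eq_mul, mul_comm, mul_left_comm]
    _ = oscillatoryIntegral μ φ (ε • (∑ j, ∑ k, ∑ n, gradTerm j k n)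
          + ε ^ 2 • ∑ j, ∑ k, ∑ n, ∑ r, hessTerm j k n r) := by
      simp only [map_add, map_smul, map_sum, smul_eq_mul, Finset.mul_sum,
        ← Finset.sum_add_distrib]
      refine Finset.sum_congr rfl fun j _ => Finset.sum_congr rfl fun k _ => ?_
      simpa only [Finset.mul_sum, ← Finset.sum_add_distrib] using
        oscillatoryIntegral_smulLeftCLM_smulLeftCLM hφ hM a b ε (hA k) (hA j)
          (fun x => hX x k) (fun x => hX x j) (G j k)
    _ = _ := by
      simp only [oscillatoryIntegral_apply hφ hM, gradTerm, hessTerm, add_apply, smul_apply,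
        sum_apply, neg_apply, SchwartzMap.smulLeftCLM_apply, coe_complexLineDerivCLM, hA, hdX,
        smul_eq_mul, mul_comm, mul_assoc, mul_neg]

end OscillatoryIntegral

section FrozenGaussianPhase

variable {d : ℕ} {x : Fin d → ℝ} {S : (Fin d → ℝ) × (Fin d → ℝ) → ℝ}
  {Q P : (Fin d → ℝ) × (Fin d → ℝ) → Fin d → ℝ}

theorem hasTemperateGrowth_FGAphase (hS : S.HasTemperateGrowth) (hQ : Q.HasTemperateGrowth)
    (hP : P.HasTemperateGrowth) : (FGAphase d x S Q P).HasTemperateGrowth := by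
  unfold FGAphase
  simp only [Prod.mk.eta]
  fun_prop

theorem im_FGAphase (w : (Fin d → ℝ) × (Fin d → ℝ) × (Fin d → ℝ)) :
    (FGAphase d x S Q P w).im
      = (∑ j, (x j - Q w.2 j) ^ 2 + ∑ j, (w.1 j - w.2.1 j) ^ 2) / 2 := by
  simp only [FGAphase, Complex.sub_im, Complex.add_im, Complex.im_mul_ofReal, Complex.ofReal_im,
    Complex.div_ofNat_im, Complex.I_im]
  ring

theorem re_I_mul_FGAphase_div_nonpos {ε : ℝ} (hε : 0 ≤ ε)
    (w : (Fin d → ℝ) × (Fin d → ℝ) × (Fin d → ℝ)) :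
    (Complex.I * FGAphase d x S Q P w / (ε : ℂ)).re ≤ 0 := by
  rw [Complex.div_ofReal_re, Complex.I_mul_re, im_FGAphase]
  exact div_nonpos_of_nonpos_of_nonneg (neg_nonpos.2 (by positivity)) hε

theorem dz3_eq_complexLineDeriv (k : Fin d) :
    dz3 d k = complexLineDeriv (0, Pi.single k 1, 0) (0, 0, Pi.single k 1) :=
  rfl

theorem dz3_const_sub_comp_snd (c : ℂ) {w : (Fin d → ℝ) × (Fin d → ℝ) × (Fin d → ℝ)}
    (hQ : DifferentiableAt ℝ Q w.2) (n j : Fin d) :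
    dz3 d n (fun v => c - (Q v.2 j : ℂ)) w = -dzQ d Q w.2 n j := by
  have hQj : DifferentiableAt ℝ (fun v => (Q v j : ℂ)) w.2 :=
    Complex.ofRealCLM.differentiableAt.comp w.2 (differentiableAt_pi.1 hQ j)
  have hderiv : HasFDerivAt (fun v : (Fin d → ℝ) × (Fin d → ℝ) × (Fin d → ℝ) =>
      c - (Q v.2 j : ℂ)) _ w := (hQj.hasFDerivAt.comp w hasFDerivAt_snd).const_sub c
  simp only [dz3, dzQ, hderiv.fderiv, neg_apply, ContinuousLinearMap.comp_apply,
    ContinuousLinearMap.coe_snd']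
  ring

theorem mul_dz3_I_mul_FGAphase_div {ε : ℝ} (hε : ε ≠ 0)
    {w : (Fin d → ℝ) × (Fin d → ℝ) × (Fin d → ℝ)}
    (hΦ : DifferentiableAt ℝ (FGAphase d x S Q P) w) (n : Fin d) :
    (ε : ℂ) * dz3 d n (fun v => Complex.I * FGAphase d x S Q P v / (ε : ℂ)) w
      = Complex.I * dz3 d n (FGAphase d x S Q P) w := by
  have h := complexLineDeriv_const_mul (0, Pi.single n 1, 0) (0, 0, Pi.single n 1)
    (Complex.I / (ε : ℂ)) hΦ
  simp only [div_mul_eq_mul_div, ← dz3_eq_complexLineDeriv] at h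
  rw [h, mul_div_cancel₀ _ (Complex.ofReal_ne_zero.2 hε)]

theorem sub_eq_mul_sum_dz3 {ε : ℝ} (hε : ε ≠ 0)
    {w : (Fin d → ℝ) × (Fin d → ℝ) × (Fin d → ℝ)}
    (hΦ : DifferentiableAt ℝ (FGAphase d x S Q P) w)
    (hZPhi : ∀ k, Complex.I * dz3 d k (FGAphase d x S Q P) w
      = ∑ j, Zentry d Q P w.2 k j * ((x j : ℂ) - (Q w.2 j : ℂ)))
    {A : Matrix (Fin d) (Fin d) ℂ} (hA : A * Matrix.of (Zentry d Q P w.2) = 1) (j : Fin d) :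
    (x j : ℂ) - (Q w.2 j : ℂ) = (ε : ℂ) * ∑ n, A j n *
      dz3 d n (fun v => Complex.I * FGAphase d x S Q P v / (ε : ℂ)) w := by
  let v : Fin d → ℂ := fun i => (x i : ℂ) - (Q w.2 i : ℂ)
  calc
    v j = A.mulVec ((Matrix.of (Zentry d Q P w.2)).mulVec v) j := by
      rw [Matrix.mulVec_mulVec, hA, Matrix.one_mulVec]
    _ = ∑ n, A j n * (Complex.I * dz3 d n (FGAphase d x S Q P) w) := by
      simp only [Matrix.mulVec, dotProduct, Matrix.of_apply, hZPhi, v]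
    _ = _ := by
      simp only [Finset.mul_sum, mul_left_comm, ← mul_dz3_I_mul_FGAphase_div hε hΦ]

end FrozenGaussianPhase

/-- the second-order integration by parts lemma of the frozen Gaussian
approximation: `∫ (x−Q)·G(x−Q) e^{iΦ/ε}
  = ∫ [ε Σ (∂_{z_n}Q_j) G_{jk} Z⁻¹_{kn} + ε² Σ ∂_{z_r}(∂_{z_n}(G_{jk}Z⁻¹_{kn}) Z⁻¹_{jr})] e^{iΦ/ε}`. -/
theorem stmt_5 (d : ℕ) (hd : 1 ≤ d) (ε : ℝ) (hε : 0 < ε) (x : Fin d → ℝ)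
    (S : (Fin d → ℝ) × (Fin d → ℝ) → ℝ)
    (Q P : (Fin d → ℝ) × (Fin d → ℝ) → Fin d → ℝ)
    (hS : Function.HasTemperateGrowth S)
    (hQ : Function.HasTemperateGrowth Q) (hP : Function.HasTemperateGrowth P)
    (hZPhi : ∀ y q p : Fin d → ℝ, ∀ k : Fin d,
      Complex.I * dz3 d k (FGAphase d x S Q P) (y, q, p)
        = ∑ j, Zentry d Q P (q, p) k j * (((x j : ℝ) : ℂ) - ((Q (q, p) j : ℝ) : ℂ)))
    (hZinv : ∀ w : (Fin d → ℝ) × (Fin d → ℝ),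
      IsUnit (Matrix.of (fun k j => Zentry d Q P w k j) : Matrix (Fin d) (Fin d) ℂ))
    (Zinv : (Fin d → ℝ) × (Fin d → ℝ) → Matrix (Fin d) (Fin d) ℂ)
    (hZinvL : ∀ w, Zinv w * Matrix.of (fun k j => Zentry d Q P w k j) = 1)
    (hZinvR : ∀ w, Matrix.of (fun k j => Zentry d Q P w k j) * Zinv w = 1)
    (hZinvTemp : ∀ j k : Fin d, Function.HasTemperateGrowth (fun w => Zinv w j k))
    (G : SchwartzMap ((Fin d → ℝ) × (Fin d → ℝ) × (Fin d → ℝ)) (Fin d → Fin d → ℂ)) :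
    (∫ w : (Fin d → ℝ) × (Fin d → ℝ) × (Fin d → ℝ),
        (∑ j, ∑ k, (((x j : ℝ) : ℂ) - ((Q (w.2.1, w.2.2) j : ℝ) : ℂ)) * G w j k
            * (((x k : ℝ) : ℂ) - ((Q (w.2.1, w.2.2) k : ℝ) : ℂ)))
          * Complex.exp (Complex.I * FGAphase d x S Q P w / (ε : ℂ)))
    = ∫ w : (Fin d → ℝ) × (Fin d → ℝ) × (Fin d → ℝ),
        ((ε : ℂ) * (∑ j, ∑ k, ∑ n,
            dzQ d Q (w.2.1, w.2.2) n j * G w j k * Zinv (w.2.1, w.2.2) k n)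
          + (ε : ℂ) ^ 2 * (∑ j, ∑ k, ∑ n, ∑ r,
            dz3 d r (fun w' =>
                dz3 d n (fun w'' => G w'' j k * Zinv (w''.2.1, w''.2.2) k n) w'
                  * Zinv (w'.2.1, w'.2.2) j r) w))
          * Complex.exp (Complex.I * FGAphase d x S Q P w / (ε : ℂ)) := by
  have hΦ := hasTemperateGrowth_FGAphase (x := x) hS hQ hP
  have hφ : (fun w => Complex.I * FGAphase d x S Q P w / (ε : ℂ)).HasTemperateGrowth := by
    simp only [div_eq_mul_inv]
    fun_prop
  have hsub (w : (Fin d → ℝ) × (Fin d → ℝ) × (Fin d → ℝ)) (j : Fin d) :=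
    sub_eq_mul_sum_dz3 hε.ne' (hΦ.1.differentiable (by simp) w) (hZPhi w.1 w.2.1 w.2.2)
      (hZinvL w.2) j
  have hvol : (volume : Measure ((Fin d → ℝ) × (Fin d → ℝ) × (Fin d → ℝ))).IsAddHaarMeasure :=
    have := Measure.prod.instIsAddHaarMeasure (volume : Measure (Fin d → ℝ))
      (volume : Measure (Fin d → ℝ))
    Measure.prod.instIsAddHaarMeasure _ _
  let entry (j k : Fin d) : 𝓢((Fin d → ℝ) × (Fin d → ℝ) × (Fin d → ℝ), ℂ) :=
    G.postcompCLM ((ContinuousLinearMap.proj (R := ℝ) (φ := fun _ => ℂ) k).comp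
      (ContinuousLinearMap.proj (R := ℝ) (φ := fun _ => Fin d → ℂ) j))
  have hibp := integral_quadraticForm_mul_cexp (μ := volume) hφ
    (re_I_mul_FGAphase_div_nonpos hε.le) (fun n => (0, Pi.single n 1, 0))
    (fun n => (0, 0, Pi.single n 1)) (ε : ℂ) (A := fun w => Zinv w.2)
    (fun j k => (hZinvTemp j k).comp hasTemperateGrowth_snd) hsub entry
  simp only [← dz3_eq_complexLineDeriv, neg_neg,
    dz3_const_sub_comp_snd _ (hQ.1.differentiable (by simp) _)] at hibp
  exact hibp
end
end
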